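/- Let a > 0 and let y : (0,∞) → ℝ be a twice differentiable function, not identically zero, satisfying y''(x) − x y'(x) − a y(x) = 0 for all x > 0 and y(x) → 0 as x → ∞. Then y is integrable on (0,∞) (i.e., ∫₀^∞ |y(x)| dx < ∞) if and only if a > 1. -/

import Mathlib

open Filter Set MeasureTheory

/-!
Write `z = y'`, so that `z' = x z + a y`. The asymptotics of the Kummer function are not needed;
four monotone quantities suffice.

* The energy `e^{(1+a)x} (y² + z²)` is nondecreasing on `(0,∞)`. Hence `y` is bounded near `0`,
  and a solution with `y(x₀) = z(x₀) = 0` vanishes to the left of `x₀`.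
* The product `e^{-x²/2} y z` is nondecreasing. If it were nonnegative at some point, `y²` would be
  nondecreasing from there on while tending to `0`, so `y` would vanish on a half-line and then
  identically. Hence `y z < 0` everywhere, and up to a sign `y > 0` and `z < 0`.
* The function `G = z - x y` satisfies `G' = (a - 1) y` and `G < 0`. If `a > 1`, then `G` is
  increasing and bounded above, so `y = G' / (a - 1)` is integrable at infinity.
* If `a ≤ 1`, then `G` is nonincreasing, so `z - x y ≤ G(1) = -c < 0` on `[1,∞)`. It follows that
  `(y - (c/2)/x) e^{-x²/2}` is nonincreasing there with limit `0`, hence nonnegative. Thus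
  `y ≥ (c/2)/x`, which is not integrable.
-/

theorem monotoneOn_of_hasDerivAt_nonneg {f f' : ℝ → ℝ} {D : Set ℝ} (hD : Convex ℝ D)
    (hf : ∀ x ∈ D, HasDerivAt f (f' x) x) (h : ∀ x ∈ D, 0 ≤ f' x) : MonotoneOn f D :=
  monotoneOn_of_deriv_nonneg hD (fun x hx => (hf x hx).continuousAt.continuousWithinAt)
    (fun x hx => (hf x (interior_subset hx)).differentiableAt.differentiableWithinAt)
    (fun x hx => by rw [(hf x (interior_subset hx)).deriv]; exact h x (interior_subset hx))

theorem antitoneOn_of_hasDerivAt_nonpos {f f' : ℝ → ℝ} {D : Set ℝ} (hD : Convex ℝ D)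
    (hf : ∀ x ∈ D, HasDerivAt f (f' x) x) (h : ∀ x ∈ D, f' x ≤ 0) : AntitoneOn f D :=
  antitoneOn_of_deriv_nonpos hD (fun x hx => (hf x hx).continuousAt.continuousWithinAt)
    (fun x hx => (hf x (interior_subset hx)).differentiableAt.differentiableWithinAt)
    (fun x hx => by rw [(hf x (interior_subset hx)).deriv]; exact h x (interior_subset hx))

theorem hasDerivAt_gauss (x : ℝ) :
    HasDerivAt (fun t : ℝ => Real.exp (-(t ^ 2 / 2))) (Real.exp (-(x ^ 2 / 2)) * (-x)) x := by
  have h : HasDerivAt (fun t : ℝ => -(t ^ 2 / 2)) (-x) x := by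
    refine (((hasDerivAt_id x).pow 2).div_const 2).neg.congr_deriv ?_
    simp
  exact h.exp

theorem energy_monotoneOn {a : ℝ} (ha : 0 < a) {y z : ℝ → ℝ}
    (hy : ∀ x ∈ Ioi (0 : ℝ), HasDerivAt y (z x) x)
    (hz : ∀ x ∈ Ioi (0 : ℝ), HasDerivAt z (x * z x + a * y x) x) :
    MonotoneOn (fun x => Real.exp ((1 + a) * x) * (y x ^ 2 + z x ^ 2)) (Ioi 0) := by
  refine monotoneOn_of_hasDerivAt_nonneg (convex_Ioi 0)
    (f' := fun x => Real.exp ((1 + a) * x) *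
      ((1 + a) * (y x + z x) ^ 2 + 2 * (x * z x ^ 2))) ?_ ?_
  · intro x hx
    have h1 : HasDerivAt (fun t : ℝ => Real.exp ((1 + a) * t))
        (Real.exp ((1 + a) * x) * ((1 + a) * 1)) x := ((hasDerivAt_id x).const_mul (1 + a)).exp
    refine (h1.mul (((hy x hx).pow 2).add ((hz x hx).pow 2))).congr_deriv ?_
    simp
    ring
  · intro x hx
    have : (0 : ℝ) < x := hx
    positivity

/-- A nontrivial decaying solution satisfies `y y' < 0` throughout `(0,∞)`. -/
theorem mul_deriv_neg {a : ℝ} (ha : 0 < a) {y z : ℝ → ℝ}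
    (hy : ∀ x ∈ Ioi (0 : ℝ), HasDerivAt y (z x) x)
    (hz : ∀ x ∈ Ioi (0 : ℝ), HasDerivAt z (x * z x + a * y x) x)
    (hne : ∃ x > (0 : ℝ), y x ≠ 0) (hlim : Tendsto y atTop (nhds 0)) :
    ∀ x ∈ Ioi (0 : ℝ), y x * z x < 0 := by
  have hw : MonotoneOn (fun x => Real.exp (-(x ^ 2 / 2)) * (y x * z x)) (Ioi 0) := by
    refine monotoneOn_of_hasDerivAt_nonneg (convex_Ioi 0)
      (f' := fun x => Real.exp (-(x ^ 2 / 2)) * (z x ^ 2 + a * y x ^ 2)) ?_ ?_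
    · intro x hx
      refine ((hasDerivAt_gauss x).mul ((hy x hx).mul (hz x hx))).congr_deriv ?_
      simp
      ring
    · intro x hx
      positivity
  intro x₀ hx₀
  by_contra! h0
  have hx₀' : (0 : ℝ) < x₀ := hx₀
  have hyz : ∀ x ∈ Ici x₀, 0 ≤ y x * z x := by
    intro x hx
    have h1 := hw hx₀ (lt_of_lt_of_le hx₀' hx) hx
    simp only at h1
    have h2 : 0 ≤ Real.exp (-(x ^ 2 / 2)) * (y x * z x) := le_trans (by positivity) h1
    exact nonneg_of_mul_nonneg_right h2 (Real.exp_pos _)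
  have hsq : MonotoneOn (fun x => y x ^ 2) (Ici x₀) := by
    refine monotoneOn_of_hasDerivAt_nonneg (convex_Ici x₀) (f' := fun x => 2 * (y x * z x)) ?_ ?_
    · intro x hx
      refine ((hy x (lt_of_lt_of_le hx₀' hx)).pow 2).congr_deriv ?_
      simp
      ring
    · intro x hx
      have := hyz x hx
      positivity
  have hlim2 : Tendsto (fun x => y x ^ 2) atTop (nhds 0) := by simpa using hlim.pow 2
  have hzero : ∀ x ∈ Ici x₀, y x = 0 := by
    intro x hx
    have h1 : y x ^ 2 ≤ 0 := by
      refine ge_of_tendsto hlim2 ?_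
      filter_upwards [eventually_ge_atTop x] with t ht
      exact hsq hx (le_trans hx ht) ht
    exact pow_eq_zero_iff two_ne_zero |>.1 (le_antisymm h1 (sq_nonneg (y x)))
  -- At interior points of the half-line where `y` vanishes, its derivative vanishes as well.
  have hz0 : ∀ x ∈ Ioi x₀, z x = 0 := by
    intro x hx
    have h1 : y =ᶠ[nhds x] fun _ => 0 := by
      filter_upwards [Ioi_mem_nhds hx] with t ht
      exact hzero t (mem_Ici.2 (le_of_lt (mem_Ioi.1 ht)))
    exact (hy x (lt_trans hx₀' hx)).unique ((hasDerivAt_const x (0 : ℝ)).congr_of_eventuallyEq h1)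
  obtain ⟨x, hx, hyx⟩ := hne
  rcases le_or_gt x₀ x with hle | hlt
  · exact hyx (hzero x hle)
  · have hx1 : x₀ < x₀ + 1 := by linarith
    have h1 := energy_monotoneOn ha hy hz hx (show x₀ + 1 ∈ Ioi (0 : ℝ) from lt_trans hx₀' hx1)
      (by linarith)
    simp only [hzero _ (le_of_lt hx1), hz0 _ hx1] at h1
    have : 0 < Real.exp ((1 + a) * x) * (y x ^ 2 + z x ^ 2) := by positivity
    norm_num at h1
    linarith

/-- The integrability criterion for a positive decreasing solution. -/
theorem integrableOn_iff_of_pos {a : ℝ} (ha : 0 < a) {y z : ℝ → ℝ}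
    (hy : ∀ x ∈ Ioi (0 : ℝ), HasDerivAt y (z x) x)
    (hz : ∀ x ∈ Ioi (0 : ℝ), HasDerivAt z (x * z x + a * y x) x)
    (hpos : ∀ x ∈ Ioi (0 : ℝ), 0 < y x) (hneg : ∀ x ∈ Ioi (0 : ℝ), z x < 0)
    (hlim : Tendsto y atTop (nhds 0)) :
    IntegrableOn y (Ioi 0) ↔ 1 < a := by
  have hG : ∀ x ∈ Ioi (0 : ℝ), HasDerivAt (fun t => z t - t * y t) ((a - 1) * y x) x := by
    intro x hx
    refine ((hz x hx).sub ((hasDerivAt_id x).mul (hy x hx))).congr_deriv ?_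
    simp
    ring
  have hGneg : ∀ x ∈ Ioi (0 : ℝ), z x - x * y x < 0 := by
    intro x hx
    have h1 := hneg x hx
    have h2 := mul_pos (show (0 : ℝ) < x from hx) (hpos x hx)
    linarith
  have hsub : Ici (1 : ℝ) ⊆ Ioi 0 := fun x hx =>
    mem_Ioi.2 (lt_of_lt_of_le one_pos (mem_Ici.1 hx))
  constructor
  · intro hint
    by_contra! hale
    have hanti : AntitoneOn (fun t => z t - t * y t) (Ici 1) :=
      antitoneOn_of_hasDerivAt_nonpos (convex_Ici 1) (fun x hx => hG x (hsub hx))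
        (fun x hx => mul_nonpos_of_nonpos_of_nonneg (by linarith) (hpos x (hsub hx)).le)
    obtain ⟨k, hk, hkG⟩ : ∃ k : ℝ, 0 < k ∧ ∀ x ∈ Ici (1 : ℝ), z x - x * y x ≤ -(2 * k) := by
      refine ⟨-(z 1 - 1 * y 1) / 2, ?_, fun x hx => ?_⟩
      · have := hGneg 1 (mem_Ioi.2 one_pos)
        linarith
      · have := hanti self_mem_Ici hx hx
        simp only at this
        linarith
    have hu : AntitoneOn (fun x => Real.exp (-(x ^ 2 / 2)) * (y x - k * x⁻¹)) (Ici 1) := by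
      refine antitoneOn_of_hasDerivAt_nonpos (convex_Ici 1)
        (f' := fun x => Real.exp (-(x ^ 2 / 2)) * (z x - x * y x + k + k * (x ^ 2)⁻¹)) ?_ ?_
      · intro x hx
        have hx0 : x ≠ 0 := ne_of_gt (hsub hx)
        refine ((hasDerivAt_gauss x).mul
          ((hy x (hsub hx)).sub ((hasDerivAt_inv hx0).const_mul k))).congr_deriv ?_
        simp
        field_simp
        ring
      · intro x hx
        have hx1 : (1 : ℝ) ≤ x := hx
        have h1 : (x ^ 2)⁻¹ ≤ 1 := inv_le_one_of_one_le₀ (by nlinarith)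
        have h2 := hkG x hx
        have h3 : k * (x ^ 2)⁻¹ ≤ k := by nlinarith
        exact mul_nonpos_of_nonneg_of_nonpos (Real.exp_pos _).le (by linarith)
    have hulim : Tendsto (fun x => Real.exp (-(x ^ 2 / 2)) * (y x - k * x⁻¹)) atTop (nhds 0) := by
      have h1 : Tendsto (fun x : ℝ => y x - k * x⁻¹) atTop (nhds 0) := by
        simpa using hlim.sub (tendsto_inv_atTop_zero.const_mul k)
      refine squeeze_zero_norm (fun x => ?_) (by simpa using h1.norm)
      rw [norm_mul]
      refine mul_le_of_le_one_left (norm_nonneg _) ?_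
      rw [Real.norm_eq_abs, Real.abs_exp, Real.exp_le_one_iff]
      have := sq_nonneg x
      linarith
    have hlow : ∀ x ∈ Ici (1 : ℝ), k * x⁻¹ ≤ y x := by
      intro x hx
      have h1 : 0 ≤ Real.exp (-(x ^ 2 / 2)) * (y x - k * x⁻¹) := by
        refine le_of_tendsto hulim ?_
        filter_upwards [eventually_ge_atTop x] with t ht
        exact hu hx (le_trans hx ht) ht
      have := nonneg_of_mul_nonneg_right h1 (Real.exp_pos _)
      linarith
    have h1 : IntegrableOn (fun x : ℝ => k * x⁻¹) (Ioi 1) := by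
      refine Integrable.mono' (hint.mono_set (Ioi_subset_Ioi zero_le_one))
        (by fun_prop) ?_
      refine (ae_restrict_mem measurableSet_Ioi).mono fun x hx => ?_
      have hx0 : (0 : ℝ) < x := lt_trans one_pos hx
      rw [Real.norm_of_nonneg (by positivity)]
      exact hlow x (mem_Ici.2 (le_of_lt (mem_Ioi.1 hx)))
    refine not_integrableOn_Ioi_inv (a := 1) ?_
    have h2 := h1.const_mul k⁻¹
    refine h2.congr (Eventually.of_forall fun x => ?_)
    simp only
    field_simp
  · intro h1a
    have hfar : IntegrableOn y (Ioi 1) := by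
      have hmono : MonotoneOn (fun t => z t - t * y t) (Ioi 0) :=
        monotoneOn_of_hasDerivAt_nonneg (convex_Ioi 0) hG
          (fun x hx => mul_nonneg (by linarith) (hpos x hx).le)
      -- A monotone function on all of `ℝ` that agrees with `G` on `[1,∞)`.
      have hmono' : Monotone (fun t => z (max t 1) - max t 1 * y (max t 1)) := fun s t hst =>
        hmono (hsub (le_max_right s 1)) (hsub (le_max_right t 1)) (max_le_max_right 1 hst)
      have hbdd : BddAbove (range fun t => z (max t 1) - max t 1 * y (max t 1)) := by
        refine ⟨0, ?_⟩
        rintro _ ⟨t, rfl⟩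
        exact (hGneg _ (hsub (le_max_right t 1))).le
      have hl := tendsto_atTop_ciSup hmono' hbdd
      have hl' : Tendsto (fun t => z t - t * y t) atTop
          (nhds (⨆ t, (z (max t 1) - max t 1 * y (max t 1)))) := by
        refine hl.congr' ?_
        filter_upwards [eventually_ge_atTop 1] with t ht
        rw [max_eq_left ht]
      have hI : IntegrableOn (fun x => (a - 1) * y x) (Ioi 1) :=
        integrableOn_Ioi_deriv_of_nonneg' (fun x hx => hG x (hsub hx))
          (fun x hx => mul_nonneg (by linarith) (hpos x (hsub (mem_Ici.2 (le_of_lt (mem_Ioi.1 hx))))).le) hl'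
      have ha1 : a - 1 ≠ 0 := by linarith
      refine (hI.const_mul (a - 1)⁻¹).congr (Eventually.of_forall fun x => ?_)
      simp only
      field_simp
    have hnear : IntegrableOn y (Ioc 0 1) := by
      have hcont : ContinuousOn y (Ioc 0 1) := fun x hx =>
        (hy x hx.1).continuousAt.continuousWithinAt
      set M : ℝ := Real.exp ((1 + a) * 1) * (y 1 ^ 2 + z 1 ^ 2) with hM
      refine IntegrableOn.of_bound (by simp)
        (hcont.aestronglyMeasurable measurableSet_Ioc) (M + 1) ?_
      refine (ae_restrict_mem measurableSet_Ioc).mono fun x hx => ?_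
      have h1 := energy_monotoneOn ha hy hz hx.1 (mem_Ioi.2 (zero_lt_one' ℝ)) hx.2
      simp only [← hM] at h1
      have h2 : 1 ≤ Real.exp ((1 + a) * x) :=
        Real.one_le_exp (mul_nonneg (by linarith) hx.1.le)
      have h3 : y x ^ 2 + z x ^ 2 ≤ M :=
        (le_mul_of_one_le_left (by positivity) h2).trans h1
      rw [Real.norm_of_nonneg (hpos x hx.1).le]
      nlinarith [sq_nonneg (y x - 1), sq_nonneg (z x), sq_nonneg (y x)]
    rw [← Ioc_union_Ioi_eq_Ioi (zero_le_one' ℝ)]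
    exact hnear.union hfar

/-- A nontrivial decaying solution of `y'' − x y' − a y = 0` on `(0,∞)` (with
`a > 0`) is integrable on `(0,∞)` if and only if `a > 1`. -/
theorem decaying_solution_integrable_iff (a : ℝ) (ha : 0 < a) (y : ℝ → ℝ)
    (hy : ∀ x > (0 : ℝ), DifferentiableAt ℝ y x)
    (hy' : ∀ x > (0 : ℝ), DifferentiableAt ℝ (deriv y) x)
    (hode : ∀ x > (0 : ℝ), deriv (deriv y) x - x * deriv y x - a * y x = 0)
    (hne : ∃ x > (0 : ℝ), y x ≠ 0)
    (hlim : Tendsto y atTop (nhds 0)) :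
    IntegrableOn y (Ioi 0) ↔ 1 < a := by
  have hY : ∀ x ∈ Ioi (0 : ℝ), HasDerivAt y (deriv y x) x := fun x hx => (hy x hx).hasDerivAt
  have hZ : ∀ x ∈ Ioi (0 : ℝ), HasDerivAt (deriv y) (x * deriv y x + a * y x) x := fun x hx =>
    (hy' x hx).hasDerivAt.congr_deriv (by linarith [hode x hx])
  have hprod := mul_deriv_neg ha hY hZ hne hlim
  have hcont : ContinuousOn y (Ioi 0) := fun x hx => (hY x hx).continuousAt.continuousWithinAt
  have hn0 : ∀ x ∈ Ioi (0 : ℝ), y x ≠ 0 := fun x hx h0 => by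
    have := hprod x hx
    simp [h0] at this
  have hsign : (∀ x ∈ Ioi (0 : ℝ), 0 < y x) ∨ (∀ x ∈ Ioi (0 : ℝ), y x < 0) := by
    by_contra! hcon
    obtain ⟨⟨s, hs, hys⟩, t, ht, hyt⟩ := hcon
    obtain ⟨r, hr, hr0⟩ := isPreconnected_Ioi.intermediate_value hs ht hcont ⟨hys, hyt⟩
    exact hn0 r hr hr0
  rcases hsign with hpos | hneg
  · exact integrableOn_iff_of_pos ha hY hZ hpos
      (fun x hx => (pos_iff_neg_of_mul_neg (hprod x hx)).1 (hpos x hx)) hlim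
  · have key := integrableOn_iff_of_pos ha (y := fun x => -y x) (z := fun x => -deriv y x)
      (fun x hx => (hY x hx).neg)
      (fun x hx => (hZ x hx).neg.congr_deriv (by ring))
      (fun x hx => neg_pos.2 (hneg x hx))
      (fun x hx => neg_neg_iff_pos.2 ((neg_iff_pos_of_mul_neg (hprod x hx)).1 (hneg x hx)))
      (by simpa using hlim.neg)
    rw [← key]
    exact (integrable_neg_iff (f := y)).symm
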